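/- arXiv:2601.13782 — 4 statements merged into one kernel-verified Lean document; each statement's English description precedes it below -/
import Mathlib

section
/- Let Ω ⊂ ℝ^d be a compact set satisfying the interior cone condition, let μ be a nicely behaving distribution on Ω, and let X_1,…,X_n be i.i.d. random points with law μ. Let h_n denote the fill distance of {X_1,…,X_n} with respect to Ω. Then h_n = O_P(n^{-1/d} (log n)^{1/d}); explicitly, for every ρ ∈ (0,1) there exist a constant K_h > 0 and an integer N_h such that for all n ≥ N_h, P( h_n > 2 K_h · n^{-1/d} (log n)^{1/d} ) ≤ ρ. -/
open MeasureTheory Metric Filter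
open scoped ENNReal RealInnerProductSpace

/-- Fill distance of the sample `X` with respect to the set `Ω`. -/
noncomputable def fillDist {d n : ℕ} (Ω : Set (EuclideanSpace ℝ (Fin d)))
    (X : Fin n → EuclideanSpace ℝ (Fin d)) : ℝ :=
  ⨆ x ∈ Ω, ⨅ i, dist x (X i)

/-- The uniform probability measure on `Ω` (normalized Lebesgue measure restricted to `Ω`). -/
noncomputable def uniformMeasure {d : ℕ} (Ω : Set (EuclideanSpace ℝ (Fin d))) :
    Measure (EuclideanSpace ℝ (Fin d)) :=
  (volume Ω)⁻¹ • volume.restrict Ω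

/-- A nicely behaving distribution on `Ω`: a probability measure comparable to the uniform
measure on `Ω`. -/
def NicelyBehaving {d : ℕ} (Ω : Set (EuclideanSpace ℝ (Fin d)))
    (μ : Measure (EuclideanSpace ℝ (Fin d))) : Prop :=
  IsProbabilityMeasure μ ∧
    ∃ c C : ℝ≥0∞, 0 < c ∧ c ≤ C ∧ C < ⊤ ∧
      c • uniformMeasure Ω ≤ μ ∧ μ ≤ C • uniformMeasure Ω

/-- Interior cone condition for `Ω ⊆ ℝ^d`. -/
def InteriorConeCondition {d : ℕ} (Ω : Set (EuclideanSpace ℝ (Fin d))) : Prop :=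
  ∃ θ : ℝ, θ ∈ Set.Ioo 0 (Real.pi / 2) ∧ ∃ r : ℝ, 0 < r ∧
    ∀ x ∈ Ω, ∃ ξ : EuclideanSpace ℝ (Fin d), ‖ξ‖ = 1 ∧
      {p | ∃ y : EuclideanSpace ℝ (Fin d), ‖y‖ = 1 ∧ Real.cos θ ≤ ⟪y, ξ⟫ ∧
        ∃ l : ℝ, l ∈ Set.Icc 0 r ∧ p = x + l • y} ⊆ Ω

lemma mass_lower {d : ℕ}
    (Ω : Set (EuclideanSpace ℝ (Fin d))) (hΩ : IsCompact Ω)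
    (hcone : InteriorConeCondition Ω)
    (μ : Measure (EuclideanSpace ℝ (Fin d)))
    (hμ : NicelyBehaving Ω μ) :
    ∃ a : ℝ, 0 < a ∧ ∃ r : ℝ, 0 < r ∧ ∀ x ∈ Ω, ∀ t : ℝ, 0 < t → t ≤ r →
      ENNReal.ofReal (a * t ^ d) ≤ μ (closedBall x t) := by
  obtain ⟨θ, ⟨hθ0, hθ1⟩, r, hr, hc⟩ := hcone
  obtain ⟨-, c, C, hc0, -, -, hcμ, -⟩ := hμ
  have hcos0 : 0 < Real.cos θ := Real.cos_pos_of_mem_Ioo ⟨by linarith, hθ1⟩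
  have hcos1 : Real.cos θ < 1 := by
    have := Real.cos_lt_cos_of_nonneg_of_le_pi_div_two le_rfl hθ1.le hθ0
    simpa using this
  set κ : ℝ := (1 - Real.cos θ) / (1 + Real.cos θ) with hκ
  have hκ0 : 0 < κ := div_pos (by linarith) (by linarith)
  have hκ1 : κ < 1 := by rw [hκ, div_lt_one (by linarith)]; linarith
  have hκe : κ * (1 + Real.cos θ) = 1 - Real.cos θ := div_mul_cancel₀ _ (by linarith)
  set A : ℝ≥0∞ := c * ((volume Ω)⁻¹ *
    (ENNReal.ofReal ((κ / 2) ^ d) * volume (ball (0 : EuclideanSpace ℝ (Fin d)) 1))) with hA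
  have hvol : (volume Ω)⁻¹ ≠ 0 := ENNReal.inv_ne_zero.2 hΩ.measure_lt_top.ne
  have hA0 : A ≠ 0 := by
    refine mul_ne_zero hc0.ne' (mul_ne_zero hvol (mul_ne_zero ?_ ?_))
    · exact (ENNReal.ofReal_pos.2 (by positivity)).ne'
    · exact (measure_ball_pos _ _ one_pos).ne'
  have hm : min A 1 ≠ ⊤ := (lt_of_le_of_lt (min_le_right _ _) ENNReal.one_lt_top).ne
  have hm0 : min A 1 ≠ 0 := by
    intro h
    rcases min_eq_iff.1 h with h | h
    · exact hA0 h.1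
    · exact one_ne_zero h.1
  refine ⟨(min A 1).toReal, ENNReal.toReal_pos hm0 hm, r, hr, ?_⟩
  intro x hx t ht htr
  obtain ⟨ξ, hξ, hsub⟩ := hc x hx
  have hballs : closedBall (x + (t / 2) • ξ) (κ / 2 * t) ⊆ closedBall x t ∩ Ω := by
    intro p hp
    set z : EuclideanSpace ℝ (Fin d) := (2 / t) • (p - x) with hz
    have hpz : p = x + (t / 2) • z := by
      rw [hz, smul_smul]
      have : t / 2 * (2 / t) = 1 := by field_simp
      rw [this]; simp
    have hw : ‖z - ξ‖ ≤ κ := by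
      rw [mem_closedBall, dist_eq_norm, hpz] at hp
      have e : x + (t / 2) • z - (x + (t / 2) • ξ) = (t / 2) • (z - ξ) := by
        rw [smul_sub]; abel
      rw [e, norm_smul, Real.norm_of_nonneg (by positivity)] at hp
      have : t / 2 * ‖z - ξ‖ ≤ t / 2 * κ := by linarith
      exact le_of_mul_le_mul_left this (by positivity)
    have hzn : ‖z‖ ≤ 1 + κ := by
      have : ‖z‖ ≤ ‖ξ‖ + ‖z - ξ‖ := by
        simpa using norm_add_le ξ (z - ξ)
      linarith
    have hzi : 1 - κ ≤ ⟪z, ξ⟫ := by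
      have h1 : ⟪z, ξ⟫ = ⟪ξ, ξ⟫ + ⟪z - ξ, ξ⟫ := by rw [inner_sub_left]; ring
      have h2 := abs_real_inner_le_norm (z - ξ) ξ
      have h3 : ⟪ξ, ξ⟫ = (1 : ℝ) := by rw [real_inner_self_eq_norm_sq, hξ]; norm_num
      rw [hξ, mul_one] at h2
      have := (abs_le.1 h2).1
      linarith
    have hz0 : 0 < ‖z‖ := by
      rw [norm_pos_iff]
      intro h
      rw [h, inner_zero_left] at hzi
      linarith
    have hl : t / 2 * ‖z‖ ≤ t := by nlinarith
    constructor
    · rw [mem_closedBall, dist_eq_norm, hpz, add_sub_cancel_left, norm_smul,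
        Real.norm_of_nonneg (by positivity)]
      exact hl
    · refine hsub ⟨‖z‖⁻¹ • z, ?_, ?_, t / 2 * ‖z‖, ⟨by positivity, hl.trans htr⟩, ?_⟩
      · rw [norm_smul, norm_inv, norm_norm, inv_mul_cancel₀ hz0.ne']
      · rw [real_inner_smul_left, ← div_eq_inv_mul, le_div_iff₀ hz0]
        nlinarith
      · rw [smul_smul, mul_assoc, mul_inv_cancel₀ hz0.ne', mul_one]
        exact hpz
  calc ENNReal.ofReal ((min A 1).toReal * t ^ d)
      = min A 1 * ENNReal.ofReal (t ^ d) := by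
        rw [ENNReal.ofReal_mul ENNReal.toReal_nonneg, ENNReal.ofReal_toReal hm]
    _ ≤ A * ENNReal.ofReal (t ^ d) := by gcongr; exact min_le_left _ _
    _ = c * ((volume Ω)⁻¹ * volume (closedBall (x + (t / 2) • ξ) (κ / 2 * t))) := by
        rw [Measure.addHaar_closedBall _ _ (by positivity), finrank_euclideanSpace_fin, mul_pow,
          ENNReal.ofReal_mul (by positivity), hA]
        ring
    _ ≤ c * ((volume Ω)⁻¹ * volume (closedBall x t ∩ Ω)) := by gcongr
    _ = (c • uniformMeasure Ω) (closedBall x t) := by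
        simp [uniformMeasure, Measure.restrict_apply measurableSet_closedBall]
    _ ≤ μ (closedBall x t) := hcμ _

lemma exists_cover {d : ℕ}
    (Ω : Set (EuclideanSpace ℝ (Fin d)))
    (μ : Measure (EuclideanSpace ℝ (Fin d))) [IsProbabilityMeasure μ]
    (b t : ℝ) (hb : 0 < b) (ht : 0 < t)
    (h : ∀ x ∈ Ω, ENNReal.ofReal b ≤ μ (closedBall x (t / 3))) :
    ∃ S : Finset (EuclideanSpace ℝ (Fin d)), (∀ s ∈ S, s ∈ Ω) ∧
      (∀ x ∈ Ω, ∃ s ∈ S, dist x s ≤ t) ∧ (S.card : ℝ) * b ≤ 1 := by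
  classical
  let P : Finset (EuclideanSpace ℝ (Fin d)) → Prop := fun S =>
    (∀ s ∈ S, s ∈ Ω) ∧ ∀ s ∈ S, ∀ s' ∈ S, s ≠ s' → t < dist s s'
  have hcard : ∀ S, P S → (S.card : ℝ) * b ≤ 1 := by
    rintro S ⟨hS, hsep⟩
    have h1 : μ (⋃ s ∈ S, closedBall s (t / 3)) = ∑ s ∈ S, μ (closedBall s (t / 3)) := by
      refine measure_biUnion_finset ?_ (fun _ _ => measurableSet_closedBall)
      intro s hs s' hs' hne
      refine closedBall_disjoint_closedBall ?_
      have := hsep s hs s' hs' hne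
      linarith
    have h2 : (S.card : ℝ≥0∞) * ENNReal.ofReal b ≤ 1 := by
      calc (S.card : ℝ≥0∞) * ENNReal.ofReal b = ∑ s ∈ S, ENNReal.ofReal b := by
            rw [Finset.sum_const, nsmul_eq_mul]
        _ ≤ ∑ s ∈ S, μ (closedBall s (t / 3)) := Finset.sum_le_sum fun s hs => h s (hS s hs)
        _ = μ (⋃ s ∈ S, closedBall s (t / 3)) := h1.symm
        _ ≤ 1 := prob_le_one
    rw [← ENNReal.ofReal_natCast, ← ENNReal.ofReal_mul (by positivity)] at h2
    exact ENNReal.ofReal_le_one.1 h2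
  let Q : ℕ → Prop := fun k => ∃ S, P S ∧ S.card = k
  have hQ0 : Q 0 := ⟨∅, by simp [P], rfl⟩
  have hQb : ∀ k, Q k → k ≤ ⌊1 / b⌋₊ := by
    rintro k ⟨S, hS, rfl⟩
    refine Nat.le_floor ?_
    rw [le_div_iff₀ hb]
    exact hcard S hS
  obtain ⟨S, hS, hSc⟩ : Q (Nat.findGreatest Q ⌊1 / b⌋₊) :=
    Nat.findGreatest_spec (Nat.zero_le _) hQ0
  refine ⟨S, hS.1, ?_, hcard S hS⟩
  intro x hx
  by_contra! hcon
  have hxS : x ∉ S := fun hxS => by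
    have := hcon x hxS
    rw [dist_self] at this
    linarith
  have hP : P (insert x S) := by
    constructor
    · intro s hs
      rcases Finset.mem_insert.1 hs with rfl | hs
      · exact hx
      · exact hS.1 s hs
    · intro s hs s' hs' hne
      rcases Finset.mem_insert.1 hs with rfl | hs1
      · rcases Finset.mem_insert.1 hs' with rfl | hs'
        · exact absurd rfl hne
        · exact hcon _ hs'
      · rcases Finset.mem_insert.1 hs' with rfl | hs'
        · rw [dist_comm]; exact hcon _ hs1
        · exact hS.2 s hs1 s' hs' hne
  have hQ : Q (S.card + 1) := ⟨_, hP, Finset.card_insert_of_notMem hxS⟩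
  have := Nat.le_findGreatest (hQb _ hQ) hQ
  omega

lemma prob_bound {d n : ℕ}
    (Ω : Set (EuclideanSpace ℝ (Fin d)))
    (μ : Measure (EuclideanSpace ℝ (Fin d))) [IsProbabilityMeasure μ]
    (t q : ℝ) (ht : 0 < t) (hq : 0 ≤ q)
    (S : Finset (EuclideanSpace ℝ (Fin d))) (hS : ∀ s ∈ S, s ∈ Ω)
    (hcov : ∀ x ∈ Ω, ∃ s ∈ S, dist x s ≤ t)
    (h : ∀ x ∈ Ω, ENNReal.ofReal q ≤ μ (closedBall x t)) :
    (Measure.pi fun _ : Fin n => μ) {X | 2 * t < fillDist Ω X}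
      ≤ ENNReal.ofReal (S.card * Real.exp (-(n * q))) := by
  have hsub : {X : Fin n → EuclideanSpace ℝ (Fin d) | 2 * t < fillDist Ω X} ⊆
      ⋃ s ∈ S, Set.univ.pi fun _ : Fin n => (closedBall s t)ᶜ := by
    intro X hX
    by_contra hcon
    simp only [Set.mem_iUnion, Set.mem_pi, Set.mem_univ, true_imp_iff, not_exists, not_forall,
      Set.mem_compl_iff, not_not] at hcon
    rw [Set.mem_setOf_eq] at hX
    refine absurd hX (not_lt.2 ?_)
    refine Real.iSup_le (fun x => Real.iSup_le (fun hx => ?_) (by positivity)) (by positivity)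
    obtain ⟨s, hs, hxs⟩ := hcov x hx
    obtain ⟨i, hi⟩ := hcon s hs
    refine (ciInf_le ⟨0, ?_⟩ i).trans ?_
    · rintro _ ⟨j, rfl⟩
      exact dist_nonneg
    · have := dist_triangle x s (X i)
      rw [mem_closedBall, dist_comm] at hi
      linarith
  have hone : ∀ s ∈ S, (Measure.pi fun _ : Fin n => μ)
      (Set.univ.pi fun _ : Fin n => (closedBall s t)ᶜ) ≤ ENNReal.ofReal (Real.exp (-(n * q))) := by
    intro s hs
    have h1 : μ (closedBall s t)ᶜ ≤ ENNReal.ofReal (Real.exp (-q)) := by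
      rw [prob_compl_eq_one_sub measurableSet_closedBall]
      calc 1 - μ (closedBall s t) ≤ 1 - ENNReal.ofReal q := tsub_le_tsub_left (h s (hS s hs)) _
        _ = ENNReal.ofReal (1 - q) := by rw [ENNReal.ofReal_sub _ hq, ENNReal.ofReal_one]
        _ ≤ _ := ENNReal.ofReal_le_ofReal (Real.one_sub_le_exp_neg q)
    rw [Measure.pi_pi, Finset.prod_const, Finset.card_univ, Fintype.card_fin]
    calc _ ≤ ENNReal.ofReal (Real.exp (-q)) ^ n := by gcongr
      _ = _ := by
        rw [← ENNReal.ofReal_pow (Real.exp_pos _).le, ← Real.exp_nat_mul]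
        congr 2; ring
  calc _ ≤ _ := measure_mono hsub
    _ ≤ ∑ s ∈ S, _ := measure_biUnion_finset_le _ _
    _ ≤ ∑ s ∈ S, ENNReal.ofReal (Real.exp (-(n * q))) := Finset.sum_le_sum hone
    _ = _ := by
      rw [Finset.sum_const, nsmul_eq_mul, ENNReal.ofReal_mul (by positivity),
        ENNReal.ofReal_natCast]

/-- for i.i.d. samples from a nicely behaving distribution on a compact set
satisfying the interior cone condition, the fill distance satisfies
`h_n = O_P(n^{-1/d} (log n)^{1/d})`: for every `ρ ∈ (0,1)` there exist `K_h > 0` and `N_h`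
such that for all `n ≥ N_h`, `P(h_n > 2 K_h n^{-1/d} (log n)^{1/d}) ≤ ρ`. -/
theorem fillDist_rate {d : ℕ} (hd : 0 < d)
    (Ω : Set (EuclideanSpace ℝ (Fin d))) (hΩ : IsCompact Ω)
    (hcone : InteriorConeCondition Ω)
    (μ : Measure (EuclideanSpace ℝ (Fin d))) [IsProbabilityMeasure μ]
    (hμ : NicelyBehaving Ω μ) :
    ∀ ρ ∈ Set.Ioo (0 : ℝ) 1, ∃ Kh : ℝ, 0 < Kh ∧ ∃ Nh : ℕ, ∀ n : ℕ, Nh ≤ n →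
      (Measure.pi fun _ : Fin n => μ)
        {X | 2 * Kh * ((n : ℝ) ^ ((-1 : ℝ) / d) * Real.log n ^ ((1 : ℝ) / d)) < fillDist Ω X}
        ≤ ENNReal.ofReal ρ := by
  rintro ρ ⟨hρ, -⟩
  obtain ⟨a, ha, r, hr, hmass⟩ := mass_lower Ω hΩ hcone μ hμ
  have hdR : (d : ℝ) ≠ 0 := by exact_mod_cast hd.ne'
  have e1 : ∀ᶠ n : ℕ in atTop, (3 : ℝ) ^ d / ρ ≤ Real.log n :=
    (Real.tendsto_log_atTop.comp tendsto_natCast_atTop_atTop).eventually_ge_atTop _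
  have e2 : ∀ᶠ n : ℕ in atTop, Real.log n / n < a * r ^ d := by
    have h0 : Tendsto (fun x : ℝ => Real.log x / x) atTop (nhds 0) :=
      Real.isLittleO_log_id_atTop.tendsto_div_nhds_zero
    exact (h0.comp tendsto_natCast_atTop_atTop).eventually_lt_const (by positivity)
  obtain ⟨N, hN⟩ := eventually_atTop.1 ((e1.and e2).and (eventually_ge_atTop 2))
  refine ⟨a⁻¹ ^ ((1 : ℝ) / d), by positivity, N, ?_⟩
  intro n hn
  obtain ⟨⟨hn1, hn2⟩, hn3⟩ := hN n hn
  have hn0 : (0 : ℝ) < n := by exact_mod_cast (by omega : 0 < n)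
  have hlog : 0 < Real.log n := lt_of_lt_of_le (by positivity) hn1
  set t : ℝ := a⁻¹ ^ ((1 : ℝ) / d) * ((n : ℝ) ^ ((-1 : ℝ) / d) * Real.log n ^ ((1 : ℝ) / d))
    with htdef
  have ht : 0 < t := by positivity
  have hroot : ∀ y : ℝ, 0 ≤ y → (y ^ ((1 : ℝ) / d)) ^ d = y := fun y hy => by
    rw [← Real.rpow_natCast, ← Real.rpow_mul hy, one_div_mul_cancel hdR, Real.rpow_one]
  have hinv : ((n : ℝ) ^ ((-1 : ℝ) / d)) ^ d = (n : ℝ)⁻¹ := by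
    rw [← Real.rpow_natCast, ← Real.rpow_mul hn0.le, div_mul_cancel₀ _ hdR, Real.rpow_neg_one]
  have htd : a * t ^ d = Real.log n / n := by
    rw [htdef, mul_pow, mul_pow, hroot _ (by positivity), hroot _ hlog.le, hinv]
    field_simp
  have htr : t ≤ r := by
    by_contra! hlt
    have : r ^ d ≤ t ^ d := pow_le_pow_left₀ hr.le hlt.le d
    nlinarith
  obtain ⟨S, hS, hcov, hcard⟩ := exists_cover Ω μ (a * (t / 3) ^ d) t (by positivity) ht
    (fun x hx => hmass x hx _ (by positivity) (by linarith))
  have hb := prob_bound (n := n) Ω μ t (a * t ^ d) ht (by positivity) S hS hcov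
    (fun x hx => hmass x hx t ht htr)
  rw [mul_assoc 2]
  refine hb.trans (ENNReal.ofReal_le_ofReal ?_)
  rw [htd, mul_div_cancel₀ _ hn0.ne', Real.exp_neg, Real.exp_log hn0]
  rw [div_pow, ← mul_div_assoc, htd] at hcard
  have h3 : (0 : ℝ) < 3 ^ d := by positivity
  rw [div_le_iff₀ hρ] at hn1
  have h4 : (S.card : ℝ) * (n : ℝ)⁻¹ * Real.log n ≤ 3 ^ d := by
    have : (S.card : ℝ) * (Real.log n / n / 3 ^ d)
      = (S.card : ℝ) * (n : ℝ)⁻¹ * Real.log n / 3 ^ d := by field_simp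
    rw [this, div_le_one h3] at hcard
    exact hcard
  refine le_of_mul_le_mul_right (h4.trans ?_) hlog
  linarith
end

section
/- Let Ω ⊂ ℝ^d be a set, let μ be a Borel probability measure on ℝ^d, and let X_1,…,X_n be i.i.d. random points with law μ. Let h_n denote the fill distance of {X_1,…,X_n} with respect to Ω. Let ε > 0 and let F_ε ⊂ Ω be any finite set such that Ω ⊆ ⋃_{x ∈ F_ε} B(x, ε), where B(x,ε) is the open ball of radius ε centered at x. Then P( h_n ≥ 2ε ) ≤ Σ_{x ∈ F_ε} ( 1 − μ(B(x, ε)) )^n. -/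
open MeasureTheory Metric
open scoped ENNReal

/-- the union-bound covering estimate for the fill distance. If the finite set
`F_ε ⊆ Ω` is an `ε`-cover of `Ω`, then
`P(h_n ≥ 2ε) ≤ Σ_{x ∈ F_ε} (1 − μ(B(x,ε)))^n`. -/
theorem fillDist_covering_bound {d n : ℕ}
    (Ω : Set (EuclideanSpace ℝ (Fin d)))
    (μ : Measure (EuclideanSpace ℝ (Fin d))) [IsProbabilityMeasure μ]
    (ε : ℝ) (hε : 0 < ε)
    (F : Finset (EuclideanSpace ℝ (Fin d)))
    (hFΩ : ↑F ⊆ Ω)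
    (hcover : Ω ⊆ ⋃ x ∈ F, ball x ε) :
    (Measure.pi fun _ : Fin n => μ) {X | 2 * ε ≤ fillDist Ω X}
      ≤ ∑ x ∈ F, (1 - μ (ball x ε)) ^ n := by
  classical
  have hsub : {X : Fin n → EuclideanSpace ℝ (Fin d) | 2 * ε ≤ fillDist Ω X} ⊆
      ⋃ x ∈ F, Set.pi Set.univ (fun _ : Fin n => (ball x ε)ᶜ) := by
    intro X hX
    by_contra hcon
    have hgood : ∀ x ∈ F, ∃ i, dist x (X i) < ε := by
      intro x hx
      by_contra hne
      push Not at hne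
      apply hcon
      refine Set.mem_iUnion₂.2 ⟨x, hx, fun i _ => ?_⟩
      simp only [Set.mem_compl_iff, mem_ball, not_lt]
      rw [dist_comm]
      exact hne i
    have hbdd : ∀ y, BddBelow (Set.range fun i => dist y (X i)) := fun y =>
      ⟨0, by rintro _ ⟨i, rfl⟩; exact dist_nonneg⟩
    obtain ⟨δ, hδ0, hδε, hδ⟩ : ∃ δ : ℝ, 0 ≤ δ ∧ δ < ε ∧ ∀ x ∈ F, ∃ i, dist x (X i) ≤ δ := by
      rcases F.eq_empty_or_nonempty with rfl | hne
      · exact ⟨0, le_rfl, hε, by simp⟩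
      · have : Nonempty (Fin n) := ⟨(hgood _ hne.choose_spec).choose⟩
        choose! j hj using hgood
        obtain ⟨m, hm, hmax⟩ := F.exists_max_image (fun x => dist x (X (j x))) hne
        exact ⟨dist m (X (j m)), dist_nonneg, hj m hm, fun x hx => ⟨j x, hmax x hx⟩⟩
    have hle : fillDist Ω X ≤ ε + δ := by
      unfold fillDist
      refine Real.iSup_le (fun y => Real.iSup_le (fun hy => ?_) (by linarith)) (by linarith)
      obtain ⟨x, hx, hyx⟩ := Set.mem_iUnion₂.1 (hcover hy)
      obtain ⟨i, hi⟩ := hδ x hx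
      have h1 := ciInf_le (hbdd y) i
      have h2 := dist_triangle y x (X i)
      have h3 : dist y x < ε := hyx
      linarith
    have hX' : 2 * ε ≤ fillDist Ω X := hX
    linarith
  refine (measure_mono hsub).trans ((measure_biUnion_finset_le _ _).trans ?_)
  refine Finset.sum_le_sum fun x _ => ?_
  rw [Measure.pi_pi, Finset.prod_const, Finset.card_univ, Fintype.card_fin,
    prob_compl_eq_one_sub measurableSet_ball]
end

section
/- Let Ω ⊂ ℝ^d be a compact set satisfying the interior cone condition, let μ be a nicely behaving distribution on Ω, and let X_1,…,X_n be i.i.d. random points with law μ. Let h_n denote the fill distance of {X_1,…,X_n} with respect to Ω. Then there exist constants κ > 0 and c > 0 such that for all sufficiently small ε > 0 and all n ≥ 1, P( h_n ≥ 2ε ) ≤ (κ / ε^d) · (1 − c ε^d)^n. -/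
open MeasureTheory Metric
open scoped ENNReal RealInnerProductSpace

/-- Lower bound on the mass of balls centered in `Ω`. -/
theorem ball_mass_lower {d : ℕ}
    (Ω : Set (EuclideanSpace ℝ (Fin d))) (hΩ : IsCompact Ω)
    (hcone : InteriorConeCondition Ω)
    (μ : Measure (EuclideanSpace ℝ (Fin d)))
    (hμ : NicelyBehaving Ω μ) :
    ∃ c : ℝ, 0 < c ∧ c ≤ 1 ∧ ∃ r : ℝ, 0 < r ∧ ∀ x ∈ Ω, ∀ ε : ℝ, 0 < ε → ε ≤ r →
      ENNReal.ofReal (c * ε ^ d) ≤ μ (ball x ε) := by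
  obtain ⟨θ, ⟨hθ0, hθ1⟩, r, hr, hx⟩ := hcone
  obtain ⟨-, c₀, C, hc₀, -, -, hle, -⟩ := hμ
  have hcos0 : 0 < Real.cos θ := Real.cos_pos_of_mem_Ioo ⟨by linarith, hθ1⟩
  have hcos1 : Real.cos θ < 1 := by
    have := Real.cos_lt_cos_of_nonneg_of_le_pi_div_two le_rfl hθ1.le hθ0
    simpa using this
  set k := Real.cos θ with hk
  obtain ⟨δ, hδ⟩ : ∃ δ : ℝ, δ = (1 - k) / (1 + k) := ⟨_, rfl⟩
  have hδk : δ * (1 + k) = 1 - k := by rw [hδ]; field_simp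
  have hδ0 : 0 < δ := by rw [hδ]; apply div_pos <;> linarith
  have hδ1 : δ < 1 := by rw [hδ, div_lt_one (by linarith)]; linarith
  have hsub : ∀ x ∈ Ω, ∀ ε : ℝ, 0 < ε → ε ≤ r →
      ∃ z, ball z (δ / 2 * ε) ⊆ Ω ∩ ball x ε := by
    intro x hxΩ ε hε hεr
    obtain ⟨ξ, hξ, hC⟩ := hx x hxΩ
    refine ⟨x + (ε / 2) • ξ, fun p hp => ?_⟩
    obtain ⟨w, hw⟩ : ∃ w, w = p - (x + (ε / 2) • ξ) := ⟨_, rfl⟩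
    obtain ⟨v, hv⟩ : ∃ v, v = p - x := ⟨_, rfl⟩
    have hwn : ‖w‖ < δ / 2 * ε := by rw [hw, ← dist_eq_norm]; exact hp
    have hvw : v = (ε / 2) • ξ + w := by rw [hv, hw]; abel
    have hs : ‖(ε / 2) • ξ‖ = ε / 2 := by
      rw [norm_smul, hξ, Real.norm_of_nonneg (by linarith), mul_one]
    have hvn : ‖v‖ ≤ ε / 2 * (1 + δ) := by
      rw [hvw]; refine (norm_add_le _ _).trans ?_; rw [hs]; linarith
    have hvi : ε / 2 * (1 - δ) ≤ ⟪v, ξ⟫ := by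
      rw [hvw, inner_add_left, real_inner_smul_left, real_inner_self_eq_norm_sq, hξ]
      have h1 := abs_real_inner_le_norm w ξ
      rw [hξ, mul_one] at h1
      have := (abs_le.1 h1).1
      nlinarith
    have hvε : ‖v‖ < ε := by nlinarith
    have hvpos : 0 < ‖v‖ := by
      have h1 := real_inner_le_norm v ξ
      rw [hξ, mul_one] at h1
      have : 0 < ε / 2 * (1 - δ) := by apply mul_pos <;> linarith
      linarith
    refine ⟨hC ⟨‖v‖⁻¹ • v, ?_, ?_, ‖v‖, ⟨hvpos.le, by linarith⟩, ?_⟩, ?_⟩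
    · rw [norm_smul, norm_inv, norm_norm, inv_mul_cancel₀ hvpos.ne']
    · rw [real_inner_smul_left, inv_mul_eq_div, le_div_iff₀ hvpos]
      calc k * ‖v‖ ≤ k * (ε / 2 * (1 + δ)) := by gcongr
        _ = ε / 2 * (1 - δ) := by linear_combination ε / 2 * hδk
        _ ≤ _ := hvi
    · rw [smul_smul, mul_inv_cancel₀ hvpos.ne', one_smul, hv]; abel
    · rw [mem_ball, dist_eq_norm, ← hv]; exact hvε
  set c₁ : ℝ≥0∞ := c₀ * (volume Ω)⁻¹ * (ENNReal.ofReal ((δ / 2) ^ d) *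
    volume (ball (0 : EuclideanSpace ℝ (Fin d)) 1)) with hc₁
  have hc₁0 : c₁ ≠ 0 := by
    refine mul_ne_zero (mul_ne_zero hc₀.ne' (ENNReal.inv_ne_zero.2 hΩ.measure_lt_top.ne))
      (mul_ne_zero ?_ (measure_ball_pos _ _ one_pos).ne')
    exact (ENNReal.ofReal_pos.2 (by positivity)).ne'
  have hmin : min c₁ 1 ≠ ⊤ := ((min_le_right _ _).trans_lt ENNReal.one_lt_top).ne
  refine ⟨(min c₁ 1).toReal, ENNReal.toReal_pos ?_ hmin, ?_, r, hr, ?_⟩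
  · exact (lt_min (pos_iff_ne_zero.2 hc₁0) one_pos).ne'
  · exact ENNReal.toReal_le_of_le_ofReal zero_le_one (by simp)
  intro x hxΩ ε hε hεr
  obtain ⟨z, hz⟩ := hsub x hxΩ ε hε hεr
  have h1 := hle (ball z (δ / 2 * ε))
  have h2 : (volume.restrict Ω) (ball z (δ / 2 * ε)) = volume (ball z (δ / 2 * ε)) :=
    Measure.restrict_eq_self _ (fun p hp => (hz hp).1)
  simp only [uniformMeasure, Measure.smul_apply, smul_eq_mul, h2] at h1
  rw [Measure.addHaar_ball_of_pos _ _ (by positivity), finrank_euclideanSpace_fin, mul_pow,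
    ENNReal.ofReal_mul (by positivity)] at h1
  calc ENNReal.ofReal ((min c₁ 1).toReal * ε ^ d)
      = min c₁ 1 * ENNReal.ofReal (ε ^ d) := by
        rw [ENNReal.ofReal_mul ENNReal.toReal_nonneg, ENNReal.ofReal_toReal hmin]
    _ ≤ c₁ * ENNReal.ofReal (ε ^ d) := by gcongr; exact min_le_left _ _
    _ ≤ μ (ball z (δ / 2 * ε)) := by
        refine le_trans (le_of_eq ?_) h1
        rw [hc₁]; ring
    _ ≤ μ (ball x ε) := measure_mono (fun p hp => (hz hp).2)

/-- Finite net with a bound on its cardinality. -/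
theorem exists_net {d : ℕ} (Ω : Set (EuclideanSpace ℝ (Fin d)))
    (μ : Measure (EuclideanSpace ℝ (Fin d))) [IsProbabilityMeasure μ]
    (ρ a : ℝ) (ha : 0 < a) (hρ : 0 < ρ)
    (hb : ∀ x ∈ Ω, ENNReal.ofReal a ≤ μ (ball x ρ)) :
    ∃ S : Finset (EuclideanSpace ℝ (Fin d)), (∀ y ∈ S, y ∈ Ω) ∧
      (S.card : ℝ) * a ≤ 1 ∧ ∀ x ∈ Ω, ∃ y ∈ S, dist x y ≤ 5 * ρ := by
  obtain ⟨u, hu, hdis, hcov⟩ := Vitali.exists_disjoint_subfamily_covering_enlargement_closedBall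
    Ω id (fun _ => ρ) ρ (fun _ _ => le_rfl) 5 (by norm_num)
  have hb' : ∀ x ∈ Ω, ENNReal.ofReal a ≤ μ (closedBall x ρ) := fun x hx =>
    (hb x hx).trans (measure_mono ball_subset_closedBall)
  have hfin : u.Finite := by
    have := Measure.finite_const_le_meas_of_disjoint_iUnion μ (ENNReal.ofReal_pos.2 ha)
      (As := fun i : u => closedBall (i : EuclideanSpace ℝ (Fin d)) ρ)
      (fun i => isClosed_closedBall.measurableSet)
      (fun i j hij => hdis i.2 j.2 (fun h => hij (Subtype.ext h))) (measure_ne_top _ _)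
    have h2 : {i : u | ENNReal.ofReal a ≤ μ (closedBall (i : EuclideanSpace ℝ (Fin d)) ρ)}
        = Set.univ := Set.eq_univ_of_forall fun i => hb' _ (hu i.2)
    rw [h2] at this
    exact Set.finite_coe_iff.1 (Set.finite_univ_iff.1 this)
  refine ⟨hfin.toFinset, fun y hy => hu (hfin.mem_toFinset.1 hy), ?_, ?_⟩
  · have h1 : ∑ y ∈ hfin.toFinset, μ (closedBall y ρ) ≤ μ Set.univ :=
      sum_measure_le_measure_univ (fun i _ => isClosed_closedBall.measurableSet.nullMeasurableSet)
        (fun i hi j hj hij => (hdis (by simpa using hi) (by simpa using hj) hij).aedisjoint)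
    have h2 : ∑ y ∈ hfin.toFinset, ENNReal.ofReal a ≤ 1 := by
      refine (Finset.sum_le_sum fun y hy => hb' y (hu (hfin.mem_toFinset.1 hy))).trans ?_
      simpa using h1
    rw [Finset.sum_const, nsmul_eq_mul, ← ENNReal.ofReal_natCast,
      ← ENNReal.ofReal_mul (by positivity), ENNReal.ofReal_le_one] at h2
    exact h2
  · intro x hx
    obtain ⟨b, hbu, hb2⟩ := hcov x hx
    exact ⟨b, hfin.mem_toFinset.2 hbu, hb2 (mem_closedBall_self hρ.le)⟩

/-- quantitative tail bound for the fill distance. There are constants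
`κ, c > 0` such that for all sufficiently small `ε > 0` and all `n ≥ 1`,
`P(h_n ≥ 2ε) ≤ (κ/ε^d)(1 − c ε^d)^n`. -/
theorem fillDist_tail_bound {d : ℕ} (hd : 0 < d)
    (Ω : Set (EuclideanSpace ℝ (Fin d))) (hΩ : IsCompact Ω)
    (hcone : InteriorConeCondition Ω)
    (μ : Measure (EuclideanSpace ℝ (Fin d))) [IsProbabilityMeasure μ]
    (hμ : NicelyBehaving Ω μ) :
    ∃ κ : ℝ, 0 < κ ∧ ∃ c : ℝ, 0 < c ∧ ∃ ε₀ : ℝ, 0 < ε₀ ∧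
      ∀ ε : ℝ, 0 < ε → ε ≤ ε₀ → ∀ n : ℕ, 1 ≤ n →
        (Measure.pi fun _ : Fin n => μ) {X | 2 * ε ≤ fillDist Ω X}
          ≤ ENNReal.ofReal ((κ / ε ^ d) * (1 - c * ε ^ d) ^ n) := by
  obtain ⟨c, hc, hc1, r, hr, hball⟩ := ball_mass_lower Ω hΩ hcone μ hμ
  refine ⟨10 ^ d / c, by positivity, c, hc, min r 1, lt_min hr one_pos, ?_⟩
  intro ε hε hε0 n hn
  have hεr : ε ≤ r := hε0.trans (min_le_left _ _)
  have hε1 : ε ≤ 1 := hε0.trans (min_le_right _ _)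
  have hp : 0 ≤ 1 - c * ε ^ d := by
    have := mul_le_one₀ hc1 (by positivity) (pow_le_one₀ hε.le hε1 (n := d))
    linarith
  obtain ⟨S, hSΩ, hcard, hcov⟩ := exists_net Ω μ (ε / 10) (c * (ε / 10) ^ d) (by positivity)
    (by positivity) (fun x hx => hball x hx _ (by positivity) (by linarith))
  have hsub : {X : Fin n → EuclideanSpace ℝ (Fin d) | 2 * ε ≤ fillDist Ω X} ⊆
      ⋃ y ∈ S, Set.pi Set.univ (fun _ : Fin n => (ball y ε)ᶜ) := by
    intro X hX
    have hX' : 3 / 2 * ε < ⨆ x, ⨆ (_ : x ∈ Ω), ⨅ i, dist x (X i) :=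
      lt_of_lt_of_le (by linarith) hX
    obtain ⟨x, hx⟩ := exists_lt_of_lt_ciSup hX'
    have hxΩ : x ∈ Ω := by
      by_contra h
      have : IsEmpty (x ∈ Ω) := ⟨h⟩
      rw [Real.iSup_of_isEmpty] at hx
      linarith
    rw [ciSup_pos hxΩ] at hx
    obtain ⟨y, hy, hxy⟩ := hcov x hxΩ
    refine Set.mem_biUnion hy fun i _ hi => ?_
    have h1 : ⨅ i, dist x (X i) ≤ dist x (X i) :=
      ciInf_le ⟨0, by rintro _ ⟨j, rfl⟩; exact dist_nonneg⟩ i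
    have h2 := dist_triangle_right x (X i) y
    have h3 : dist (X i) y < ε := hi
    linarith
  have hone : ∀ y ∈ S, (Measure.pi fun _ : Fin n => μ)
      (Set.pi Set.univ (fun _ : Fin n => (ball y ε)ᶜ)) ≤
        ENNReal.ofReal ((1 - c * ε ^ d) ^ n) := by
    intro y hy
    rw [Measure.pi_pi, Finset.prod_const, Finset.card_univ, Fintype.card_fin,
      ENNReal.ofReal_pow hp]
    gcongr
    rw [prob_compl_eq_one_sub isOpen_ball.measurableSet, ENNReal.ofReal_sub _ (by positivity),
      ENNReal.ofReal_one]
    exact tsub_le_tsub_left (hball y (hSΩ y hy) ε hε hεr) _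
  refine (measure_mono hsub).trans ((measure_biUnion_finset_le _ _).trans
    ((Finset.sum_le_sum hone).trans ?_))
  rw [Finset.sum_const, nsmul_eq_mul, ← ENNReal.ofReal_natCast,
    ← ENNReal.ofReal_mul (by positivity)]
  apply ENNReal.ofReal_le_ofReal
  gcongr
  rw [div_div, le_div_iff₀ (by positivity)]
  have h10 : (0:ℝ) < 10 ^ d := by positivity
  rw [div_pow, ← mul_div_assoc, ← mul_div_assoc, div_le_one h10] at hcard
  exact hcard
end

section
/- Let Ω ⊂ ℝ^d be a compact set satisfying the interior cone condition, let μ be a nicely behaving distribution on Ω, and let X_1,…,X_n be i.i.d. random points with law μ. Fix x ∈ Ω, a constant C_D > 0, and let D_n = B(x, R_n) with R_n = C_D (log n / n)^{1/d}. Let N_{D_n} = #{ i ∈ {1,…,n} : X_i ∈ D_n } be the number of sample points lying in D_n. Then there exist finite constants 0 < γ_1 ≤ γ_2, a constant c > 0, and an integer N_0 such that for all n ≥ N_0, P( γ_1 log n ≤ N_{D_n} ≤ γ_2 log n ) ≥ 1 − 2/n^c; in particular, P( γ_1 log n ≤ N_{D_n} ≤ γ_2 log n ) → 1 as n → ∞.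 -/
open MeasureTheory Metric Filter
open scoped ENNReal RealInnerProductSpace

/-- Number of sample points of `X` lying in the set `D`. -/
noncomputable def countIn {d n : ℕ} (X : Fin n → EuclideanSpace ℝ (Fin d))
    (D : Set (EuclideanSpace ℝ (Fin d))) : ℕ :=
  Nat.card {i : Fin n // X i ∈ D}

lemma exp_count {d n : ℕ} (X : Fin n → EuclideanSpace ℝ (Fin d))
    (D : Set (EuclideanSpace ℝ (Fin d))) (t : ℝ) :
    Real.exp (t * (countIn X D : ℝ)) =
      ∏ i, (1 + D.indicator (fun _ => Real.exp t - 1) (X i)) := by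
  classical
  have h1 : ∀ i, (1 + D.indicator (fun _ => Real.exp t - 1) (X i))
      = if X i ∈ D then Real.exp t else 1 := by
    intro i
    by_cases h : X i ∈ D <;> simp [h]
  simp_rw [h1]
  rw [Finset.prod_ite, Finset.prod_const, Finset.prod_const_one, mul_one, ← Real.exp_nat_mul,
    mul_comm]
  unfold countIn
  rw [Nat.card_eq_fintype_card, Fintype.card_subtype]

lemma chernoff {d : ℕ} (μ : Measure (EuclideanSpace ℝ (Fin d))) [IsProbabilityMeasure μ]
    (n : ℕ) (D : Set (EuclideanSpace ℝ (Fin d))) (hD : MeasurableSet D) (t a : ℝ) :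
    (Measure.pi fun _ : Fin n => μ).real {X | t * a ≤ t * (countIn X D : ℝ)} ≤
      Real.exp (n * (μ.real D * (Real.exp t - 1)) - t * a) := by
  have hi : Integrable (fun y => D.indicator (fun _ => Real.exp t - 1) y) μ :=
    (integrable_const _).indicator hD
  have hint : Integrable (fun y => 1 + D.indicator (fun _ => Real.exp t - 1) y) μ :=
    (integrable_const _).add hi
  have hval : ∫ y, (1 + D.indicator (fun _ => Real.exp t - 1) y) ∂μ
      = 1 + μ.real D * (Real.exp t - 1) := by
    rw [integral_add (integrable_const _) hi, integral_indicator hD]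
    simp
  have hI : Integrable (fun X : Fin n → EuclideanSpace ℝ (Fin d) =>
      Real.exp (t * (countIn X D : ℝ))) (Measure.pi fun _ : Fin n => μ) := by
    simp_rw [exp_count]
    exact Integrable.fintype_prod (fun _ => hint)
  have hM := mul_meas_ge_le_integral_of_nonneg
    (μ := Measure.pi fun _ : Fin n => μ)
    (f := fun X => Real.exp (t * (countIn X D : ℝ)))
    (ae_of_all _ fun _ => (Real.exp_pos _).le) hI (Real.exp (t * a))
  have hE : ∫ X, Real.exp (t * (countIn X D : ℝ)) ∂(Measure.pi fun _ : Fin n => μ)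
      = (1 + μ.real D * (Real.exp t - 1)) ^ n := by
    simp_rw [exp_count]
    rw [integral_fintype_prod_eq_pow (fun y => 1 + D.indicator (fun _ => Real.exp t - 1) y),
      hval, Fintype.card_fin]
  rw [hE] at hM
  simp only [Real.exp_le_exp] at hM
  have hnn : 0 ≤ 1 + μ.real D * (Real.exp t - 1) := by
    have h1 : μ.real D ≤ 1 := measureReal_le_one
    have h0 : 0 ≤ μ.real D := measureReal_nonneg
    nlinarith [Real.exp_pos t]
  have hpow : (1 + μ.real D * (Real.exp t - 1)) ^ n
      ≤ Real.exp (n * (μ.real D * (Real.exp t - 1))) := by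
    rw [Real.exp_nat_mul]
    refine pow_le_pow_left₀ hnn ?_ n
    linarith [Real.add_one_le_exp (μ.real D * (Real.exp t - 1))]
  rw [Real.exp_sub, le_div_iff₀ (Real.exp_pos _), mul_comm]
  exact hM.trans hpow

lemma cone_ball {d : ℕ} (x ξ : EuclideanSpace ℝ (Fin d)) (hξ : ‖ξ‖ = 1) (k r R : ℝ)
    (hk0 : 0 < k) (hk1 : k < 1) (hR : 0 < R) (hRr : R ≤ r) :
    ball (x + (R / 2) • ξ) ((1 - k) / 4 * R) ⊆
      {p | ∃ y : EuclideanSpace ℝ (Fin d), ‖y‖ = 1 ∧ k ≤ ⟪y, ξ⟫ ∧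
        ∃ l : ℝ, l ∈ Set.Icc 0 r ∧ p = x + l • y} ∩ ball x R := by
  intro p hp
  obtain ⟨w, rfl⟩ : ∃ w, p = x + (R / 2) • ξ + w := ⟨p - (x + (R / 2) • ξ), by abel⟩
  have hw : ‖w‖ < (1 - k) / 4 * R := by
    simpa [mem_ball, dist_eq_norm] using hp
  set v := (R / 2) • ξ + w with hv
  have hpv : x + (R / 2) • ξ + w = x + v := by rw [hv, add_assoc]
  rw [hpv]
  have hnξ : ‖(R / 2) • ξ‖ = R / 2 := by
    rw [norm_smul, hξ, Real.norm_of_nonneg (by linarith), mul_one]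
  have hvu : ‖v‖ ≤ R / 2 + ‖w‖ := by
    calc ‖v‖ ≤ ‖(R / 2) • ξ‖ + ‖w‖ := norm_add_le _ _
      _ = _ := by rw [hnξ]
  have hin : R / 2 - ‖w‖ ≤ ⟪v, ξ⟫ := by
    rw [hv, inner_add_left, real_inner_smul_left, real_inner_self_eq_norm_sq, hξ]
    have := abs_le.1 (abs_real_inner_le_norm w ξ)
    rw [hξ, mul_one] at this
    linarith [this.1]
  have hkR : 0 < k * R := mul_pos hk0 hR
  have hvpos : 0 < ‖v‖ := by
    have h1 : ⟪v, ξ⟫ ≤ ‖v‖ * ‖ξ‖ := real_inner_le_norm _ _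
    rw [hξ, mul_one] at h1
    nlinarith
  have hvR : ‖v‖ < R := by nlinarith
  refine ⟨⟨‖v‖⁻¹ • v, ?_, ?_, ‖v‖, ⟨hvpos.le, by linarith⟩, ?_⟩, ?_⟩
  · rw [norm_smul, norm_inv, norm_norm, inv_mul_cancel₀ hvpos.ne']
  · rw [real_inner_smul_left, inv_mul_eq_div, le_div_iff₀ hvpos]
    have h1 : k * ‖v‖ ≤ k * (R / 2 + (1 - k) / 4 * R) :=
      mul_le_mul_of_nonneg_left (by linarith) hk0.le
    nlinarith [mul_nonneg hR.le (sq_nonneg (1 - k))]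
  · rw [smul_smul, mul_inv_cancel₀ hvpos.ne', one_smul]
  · simpa [mem_ball, dist_eq_norm] using hvR

lemma ball_bounds {d : ℕ} (hd : 0 < d)
    (Ω : Set (EuclideanSpace ℝ (Fin d))) (hΩ : IsCompact Ω)
    (hcone : InteriorConeCondition Ω)
    (μ : Measure (EuclideanSpace ℝ (Fin d))) [IsProbabilityMeasure μ]
    (hμ : NicelyBehaving Ω μ)
    (x : EuclideanSpace ℝ (Fin d)) (hx : x ∈ Ω) :
    ∃ A B r : ℝ, 0 < A ∧ 0 < B ∧ 0 < r ∧ ∀ R, 0 < R → R ≤ r →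
      A * R ^ d ≤ μ.real (ball x R) ∧ μ.real (ball x R) ≤ B * R ^ d := by
  haveI : Nonempty (Fin d) := ⟨⟨0, hd⟩⟩
  obtain ⟨-, c, C, hc, hcC, hC, hl, hu⟩ := hμ
  obtain ⟨θ, ⟨hθ0, hθ1⟩, r, hr, hcone⟩ := hcone
  obtain ⟨ξ, hξ, hsub⟩ := hcone x hx
  have hk0 : 0 < Real.cos θ := Real.cos_pos_of_mem_Ioo ⟨by linarith, hθ1⟩
  have hk1 : Real.cos θ < 1 := by
    have := Real.cos_lt_cos_of_nonneg_of_le_pi_div_two le_rfl hθ1.le hθ0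
    rwa [Real.cos_zero] at this
  set k := Real.cos θ with hk
  have hcone : ∀ R, 0 < R → R ≤ r → ball (x + (R / 2) • ξ) ((1 - k) / 4 * R) ⊆ Ω ∩ ball x R :=
    fun R h0 h1 => (cone_ball x ξ hξ k r R hk0 hk1 h0 h1).trans
      (Set.inter_subset_inter_left _ hsub)
  have hk4 : 0 < (1 - k) / 4 := by linarith
  set V : ℝ≥0∞ := volume (ball (0 : EuclideanSpace ℝ (Fin d)) 1) with hV
  have hV0 : V ≠ 0 := (measure_ball_pos _ _ one_pos).ne'
  have hVt : V ≠ ⊤ := measure_ball_lt_top.ne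
  have hvt : volume Ω ≠ ⊤ := hΩ.measure_lt_top.ne
  have hv0 : volume Ω ≠ 0 := by
    have h1 := measure_mono (μ := volume) ((hcone r hr le_rfl).trans Set.inter_subset_left)
    have h2 : 0 < volume (ball (x + (r / 2) • ξ) ((1 - k) / 4 * r)) :=
      measure_ball_pos _ _ (mul_pos hk4 hr)
    exact (h2.trans_le h1).ne'
  have hct : c ≠ ⊤ := (hcC.trans_lt hC).ne
  have hC0 : C ≠ 0 := (hc.trans_le hcC).ne'
  have hball : ∀ (y : EuclideanSpace ℝ (Fin d)) (s : ℝ), 0 ≤ s →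
      volume (ball y s) = ENNReal.ofReal (s ^ d) * V := by
    intro y s hs
    rw [Measure.addHaar_ball _ _ hs, finrank_euclideanSpace_fin]
  refine ⟨(c * (volume Ω)⁻¹ * V).toReal * ((1 - k) / 4) ^ d, (C * (volume Ω)⁻¹ * V).toReal, r,
    ?_, ?_, hr, ?_⟩
  · refine mul_pos (ENNReal.toReal_pos ?_ ?_) (pow_pos hk4 _)
    · exact mul_ne_zero (mul_ne_zero hc.ne' (ENNReal.inv_ne_zero.2 hvt)) hV0
    · exact ENNReal.mul_ne_top (ENNReal.mul_ne_top hct (ENNReal.inv_ne_top.2 hv0)) hVt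
  · refine ENNReal.toReal_pos ?_ ?_
    · exact mul_ne_zero (mul_ne_zero hC0 (ENNReal.inv_ne_zero.2 hvt)) hV0
    · exact ENNReal.mul_ne_top (ENNReal.mul_ne_top hC.ne (ENNReal.inv_ne_top.2 hv0)) hVt
  intro R hR hRr
  have hun : uniformMeasure Ω (ball x R) = (volume Ω)⁻¹ * volume (ball x R ∩ Ω) := by
    unfold uniformMeasure
    rw [Measure.smul_apply, Measure.restrict_apply measurableSet_ball, smul_eq_mul]
  have hlR := hl (ball x R)
  have huR := hu (ball x R)
  rw [Measure.smul_apply, smul_eq_mul, hun] at hlR huR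
  constructor
  · have h1 : c * (volume Ω)⁻¹ * V * ENNReal.ofReal (((1 - k) / 4 * R) ^ d) ≤ μ (ball x R) := by
      refine le_trans ?_ hlR
      rw [mul_assoc, mul_assoc, mul_comm V, ← hball (x + (R / 2) • ξ) _ (by positivity)]
      gcongr
      rw [Set.inter_comm]
      exact hcone R hR hRr
    have h2 := ENNReal.toReal_mono (measure_ne_top _ _) h1
    rw [ENNReal.toReal_mul, ENNReal.toReal_ofReal (by positivity), mul_pow, ← mul_assoc] at h2
    exact h2
  · have h1 : μ (ball x R) ≤ C * (volume Ω)⁻¹ * V * ENNReal.ofReal (R ^ d) := by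
      refine huR.trans ?_
      rw [mul_assoc, mul_assoc, mul_comm V, ← hball x _ hR.le]
      gcongr
      exact Set.inter_subset_left
    have h2 := ENNReal.toReal_mono (ENNReal.mul_ne_top
      (ENNReal.mul_ne_top (ENNReal.mul_ne_top hC.ne (ENNReal.inv_ne_top.2 hv0)) hVt)
      ENNReal.ofReal_ne_top) h1
    rw [ENNReal.toReal_mul, ENNReal.toReal_ofReal (by positivity)] at h2
    exact h2

lemma count_bound {d : ℕ} (μ : Measure (EuclideanSpace ℝ (Fin d))) [IsProbabilityMeasure μ]
    (n : ℕ) (hn : 2 ≤ n) (D : Set (EuclideanSpace ℝ (Fin d))) (hD : MeasurableSet D)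
    (α β g₁ g₂ c : ℝ)
    (hα : α * Real.log n ≤ n * μ.real D) (hβ : n * μ.real D ≤ β * Real.log n)
    (h₁ : g₁ + c = α * (1 - Real.exp (-1))) (h₂ : g₂ = β * (Real.exp 1 - 1) + c) :
    1 - ENNReal.ofReal (2 / (n : ℝ) ^ c) ≤ (Measure.pi fun _ : Fin n => μ)
      {X | g₁ * Real.log n ≤ (countIn X D : ℝ) ∧ (countIn X D : ℝ) ≤ g₂ * Real.log n} := by
  set P := Measure.pi fun _ : Fin n => μ with hP
  set S := {X : Fin n → EuclideanSpace ℝ (Fin d) |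
    g₁ * Real.log n ≤ (countIn X D : ℝ) ∧ (countIn X D : ℝ) ≤ g₂ * Real.log n} with hS
  have hn0 : (0 : ℝ) < n := by positivity
  have he : ∀ z : ℝ, z ≤ -(c * Real.log n) → Real.exp z ≤ 1 / (n : ℝ) ^ c := by
    intro z hz
    rw [Real.rpow_def_of_pos hn0, one_div, ← Real.exp_neg]
    exact Real.exp_le_exp.2 (by linarith)
  have hup := chernoff μ n D hD 1 (g₂ * Real.log n)
  have hlo := chernoff μ n D hD (-1) (g₁ * Real.log n)
  have he1 : 0 < Real.exp 1 - 1 := by linarith [Real.add_one_le_exp (1 : ℝ)]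
  have he2 : 0 < 1 - Real.exp (-1) := by
    have : Real.exp (-1) < 1 := Real.exp_zero ▸ Real.exp_lt_exp.2 (by norm_num)
    linarith
  have hup' := hup.trans (he _ (by
    rw [h₂]
    nlinarith [mul_le_mul_of_nonneg_right hβ he1.le]))
  have hlo' := hlo.trans (he _ (by
    have hg : g₁ = α * (1 - Real.exp (-1)) - c := by linarith
    rw [hg]
    nlinarith [mul_le_mul_of_nonneg_right hα he2.le]))
  have hsub : Sᶜ ⊆ {X | 1 * (g₂ * Real.log n) ≤ 1 * (countIn X D : ℝ)} ∪
      {X | (-1) * (g₁ * Real.log n) ≤ (-1) * (countIn X D : ℝ)} := by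
    intro X hX
    simp only [hS, Set.mem_compl_iff, Set.mem_ofPred_eq, not_and_or, not_le] at hX
    simp only [Set.mem_union, Set.mem_ofPred_eq]
    rcases hX with h | h
    · right; linarith
    · left; linarith
  have hSc : P.real Sᶜ ≤ 2 / (n : ℝ) ^ c := by
    calc P.real Sᶜ ≤ _ := measureReal_mono hsub
      _ ≤ _ := measureReal_union_le _ _
      _ ≤ 1 / (n : ℝ) ^ c + 1 / (n : ℝ) ^ c := add_le_add hup' hlo'
      _ = _ := by ring
  have hSc' : P Sᶜ ≤ ENNReal.ofReal (2 / (n : ℝ) ^ c) := by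
    rw [← ofReal_measureReal]
    exact ENNReal.ofReal_le_ofReal hSc
  rw [tsub_le_iff_right]
  calc (1 : ℝ≥0∞) = P (S ∪ Sᶜ) := by rw [Set.union_compl_self, measure_univ]
    _ ≤ P S + P Sᶜ := measure_union_le _ _
    _ ≤ _ := by gcongr

/-- with `D_n = B(x, C_D (log n / n)^{1/d})`, the number of sample points in
`D_n` is between `γ₁ log n` and `γ₂ log n` with probability at least `1 − 2/n^c`; in
particular this probability tends to `1`. -/
theorem count_in_shrinking_ball {d : ℕ} (hd : 0 < d)
    (Ω : Set (EuclideanSpace ℝ (Fin d))) (hΩ : IsCompact Ω)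
    (hcone : InteriorConeCondition Ω)
    (μ : Measure (EuclideanSpace ℝ (Fin d))) [IsProbabilityMeasure μ]
    (hμ : NicelyBehaving Ω μ)
    (x : EuclideanSpace ℝ (Fin d)) (hx : x ∈ Ω)
    (CD : ℝ) (hCD : 0 < CD) :
    ∃ γ₁ γ₂ c : ℝ, 0 < γ₁ ∧ γ₁ ≤ γ₂ ∧ 0 < c ∧ ∃ N₀ : ℕ,
      (∀ n : ℕ, N₀ ≤ n →
        1 - ENNReal.ofReal (2 / (n : ℝ) ^ c) ≤
          (Measure.pi fun _ : Fin n => μ)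
            {X | γ₁ * Real.log n ≤
                  (countIn X (ball x (CD * (Real.log n / n) ^ ((1 : ℝ) / d))) : ℝ) ∧
                (countIn X (ball x (CD * (Real.log n / n) ^ ((1 : ℝ) / d))) : ℝ) ≤
                  γ₂ * Real.log n}) ∧
      Tendsto (fun n : ℕ =>
          (Measure.pi fun _ : Fin n => μ)
            {X | γ₁ * Real.log n ≤
                  (countIn X (ball x (CD * (Real.log n / n) ^ ((1 : ℝ) / d))) : ℝ) ∧
                (countIn X (ball x (CD * (Real.log n / n) ^ ((1 : ℝ) / d))) : ℝ) ≤
                  γ₂ * Real.log n})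
        atTop (nhds 1) := by
  obtain ⟨A, B, r, hA, hB, hr, hAB⟩ := ball_bounds hd Ω hΩ hcone μ hμ x hx
  have he1 : 0 < Real.exp 1 - 1 := by linarith [Real.add_one_le_exp (1 : ℝ)]
  have he2 : 0 < 1 - Real.exp (-1) := by
    have : Real.exp (-1) < 1 := Real.exp_zero ▸ Real.exp_lt_exp.2 (by norm_num)
    linarith
  set α := A * CD ^ d with hα
  set β := B * CD ^ d with hβ
  have hα0 : 0 < α := by positivity
  have hβ0 : 0 < β := by positivity
  set c := α * (1 - Real.exp (-1)) / 2 with hc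
  have hc0 : 0 < c := by positivity
  have hlog : Tendsto (fun n : ℕ => Real.log n / n) atTop (nhds 0) :=
    (Real.isLittleO_log_id_atTop.tendsto_div_nhds_zero).comp tendsto_natCast_atTop_atTop
  have hd' : (0 : ℝ) < 1 / d := by positivity
  have hRt : Tendsto (fun n : ℕ => CD * (Real.log n / n) ^ ((1 : ℝ) / d)) atTop (nhds 0) := by
    have := (hlog.rpow_const (Or.inr hd'.le) : Tendsto _ _ (nhds ((0 : ℝ) ^ ((1 : ℝ) / d))))
    rw [Real.zero_rpow hd'.ne'] at this
    simpa using this.const_mul CD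
  obtain ⟨N₁, hN₁⟩ := eventually_atTop.1 (hRt.eventually_le_const hr)
  have key : ∀ n : ℕ, max N₁ 2 ≤ n →
        1 - ENNReal.ofReal (2 / (n : ℝ) ^ c) ≤
          (Measure.pi fun _ : Fin n => μ)
            {X | c * Real.log n ≤
                  (countIn X (ball x (CD * (Real.log n / n) ^ ((1 : ℝ) / d))) : ℝ) ∧
                (countIn X (ball x (CD * (Real.log n / n) ^ ((1 : ℝ) / d))) : ℝ) ≤
                  (β * (Real.exp 1 - 1) + c) * Real.log n} := by
    intro n hn
    have hn2 : 2 ≤ n := (le_max_right _ _).trans hn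
    have hn1 : N₁ ≤ n := (le_max_left _ _).trans hn
    have hn0 : (0 : ℝ) < n := by positivity
    have hl : 0 < Real.log n := Real.log_pos (by exact_mod_cast hn2)
    have hq : 0 < Real.log n / n := div_pos hl hn0
    have hR0 : 0 < CD * (Real.log n / n) ^ ((1 : ℝ) / d) := mul_pos hCD (Real.rpow_pos_of_pos hq _)
    have hRd : (CD * (Real.log n / n) ^ ((1 : ℝ) / d)) ^ d = CD ^ d * (Real.log n / n) := by
      rw [mul_pow, one_div, Real.rpow_inv_natCast_pow hq.le hd.ne']
    obtain ⟨h1, h2⟩ := hAB _ hR0 (hN₁ n hn1)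
    rw [hRd] at h1 h2
    refine count_bound μ n hn2 _ measurableSet_ball α β _ _ c ?_ ?_ ?_ rfl
    · calc α * Real.log n = n * (A * (CD ^ d * (Real.log n / n))) := by
            rw [hα]; field_simp
        _ ≤ _ := by gcongr
    · calc _ ≤ n * (B * (CD ^ d * (Real.log n / n))) := by gcongr
        _ = β * Real.log n := by rw [hβ]; field_simp
    · rw [hc]; ring
  refine ⟨c, β * (Real.exp 1 - 1) + c, c, hc0, ?_, hc0, max N₁ 2, key, ?_⟩
  · have := mul_pos hβ0 he1
    linarith
  · have h1 : Tendsto (fun n : ℕ => 1 - ENNReal.ofReal (2 / (n : ℝ) ^ c)) atTop (nhds 1) := by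
      have h2 : Tendsto (fun n : ℕ => 2 / (n : ℝ) ^ c) atTop (nhds 0) :=
        ((tendsto_rpow_atTop hc0).comp tendsto_natCast_atTop_atTop).const_div_atTop 2
      have h3 := ENNReal.tendsto_ofReal h2
      rw [ENNReal.ofReal_zero] at h3
      simpa using ENNReal.Tendsto.sub (tendsto_const_nhds (x := (1 : ℝ≥0∞))) h3
        (Or.inl ENNReal.one_ne_top)
    refine tendsto_of_tendsto_of_tendsto_of_le_of_le' h1 tendsto_const_nhds
      (eventually_atTop.2 ⟨_, key⟩) (Eventually.of_forall fun n => prob_le_one)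
end
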